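/- For every integer e ≥ 7 and each i ∈ {2,3}, there exists a finite metabelian σ-group M of order 3^{8+e}, generated by two elements x and y satisfying w^3 = 1, y^3 = s₇^2, s_j^3 = s_{j+2}^2 s_{j+3} for j = 2,3,4, s₅^3 = s₇^2, t₃ = s₃ s₇ w^{i-1}, and t_j = s_j for j = 4,…,7, whose abelianization is isomorphic to (ZMod (3^e)) × (ZMod 3); moreover there exists a finite group G of order 3^{10+e} with the same abelianization, admitting a σ-automorphism, with second derived subgroup nontrivial and third derived subgroup trivial (derived length exactly 3), such that G/G'' is isomorphic to M. -/

import Mathlib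

/-- The commutator `[a,b] = a⁻¹ * b⁻¹ * a * b`. -/
def comm' {G : Type*} [Group G] (a b : G) : G := a⁻¹ * b⁻¹ * a * b

/-- `s₂ = [y,x]` and `s_j = [s_(j-1), x]` for `j ≥ 3`. -/
def sgen {G : Type*} [Group G] (x y : G) : ℕ → G
  | 0 => 1
  | 1 => 1
  | 2 => comm' y x
  | (n + 3) => comm' (sgen x y (n + 2)) x

/-- `t_j = [s_(j-1), y]` for `j ≥ 3`. -/
def tgenD {G : Type*} [Group G] (x y : G) (j : ℕ) : G := comm' (sgen x y (j - 1)) y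

/-- `t₂ = [y,x]` and `t_j = [t_(j-1), y]` for `j ≥ 3`. -/
def tgenB {G : Type*} [Group G] (x y : G) : ℕ → G
  | 0 => 1
  | 1 => 1
  | 2 => comm' y x
  | (n + 3) => comm' (tgenB x y (n + 2)) y

/-- A σ-group: a group admitting an automorphism acting as inversion on the
abelianization. -/
def IsSigmaGroup (G : Type*) [Group G] : Prop :=
  ∃ σ : G ≃* G, ∀ g : G, Abelianization.of (σ g) = (Abelianization.of g)⁻¹

/-- A group is metabelian if its commutator subgroup is abelian, i.e. the second
derived subgroup is trivial. -/
def IsMetabelian (G : Type*) [Group G] : Prop := derivedSeries G 2 = ⊥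

/-!
Let `ω` be a primitive cube root of unity and `π = ω - 1`. On `ℤ[ω] / (π ^ 7)`, the `π`-coordinate
of `z * star w` is an alternating form with values in `ℤ/27` that is invariant under elements of
norm one. Embed `ℤ/27` in `ℤ/3^(e+3)` and twist the Heisenberg product on
`ℤ[ω] / (π ^ 7) × ℤ/3^(e+3)` by letting `x = (0, 1)` act as `ω` and `y = (1, ±3^(e-1))` as
`η = (1 - 9 √-3) ω`, which is another cube root of unity and agrees with `ω` modulo `π ^ 5`. In the
resulting group `G` of order `3^(10+e)`, the commutator subgroup consists of the pairs with first
coordinate in `(π)` and second coordinate in the `27`-torsion. Its elements commute up to twice the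
form, which is divisible by `3` on `(π)` but not always by `9`; so `G''` is cyclic of order `9`, and
it is central in `G'`. In `M = G / G''` second coordinates in the `27`-torsion matter only modulo
`3`, and the relations become a computation in `ℤ[ω] / (π ^ 7)`. The automorphism
`(z, c) ↦ (-star z, -c)` inverts the abelianization of `G`, and hence that of `M`.
-/

open Subgroup

open scoped commutatorElement

section GroupTheory

variable {G H : Type*} [Group G] [Group H]

lemma comm'_eq_of_mul_eq {a b c : G} (h : a * b = b * a * c) : comm' a b = c := by
  rw [comm', mul_assoc, h]
  group

lemma comm'_eq_commutatorElement (a b : G) : comm' a b = ⁅a⁻¹, b⁻¹⁆ := by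
  simp only [comm', commutatorElement_def, inv_inv]

lemma comm'_mem_commutator {K L : Subgroup G} {a b : G} (ha : a ∈ K) (hb : b ∈ L) :
    comm' a b ∈ ⁅K, L⁆ := by
  rw [comm'_eq_commutatorElement]
  exact commutator_mem_commutator (inv_mem ha) (inv_mem hb)

lemma commutator_le_of_comm'_mem {K L H : Subgroup G}
    (h : ∀ a ∈ K, ∀ b ∈ L, comm' a b ∈ H) : ⁅K, L⁆ ≤ H := by
  refine commutator_le.2 fun a ha b hb => ?_
  have hmem := h a⁻¹ (inv_mem ha) b⁻¹ (inv_mem hb)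
  rwa [comm'_eq_commutatorElement, inv_inv, inv_inv] at hmem

lemma comm'_mem (K : Subgroup G) {a b : G} (ha : a ∈ K) (hb : b ∈ K) : comm' a b ∈ K :=
  K.mul_mem (K.mul_mem (K.mul_mem (K.inv_mem ha) (K.inv_mem hb)) ha) hb

lemma map_comm' (f : G →* H) (a b : G) : f (comm' a b) = comm' (f a) (f b) := by
  simp only [comm', map_mul, map_inv]

lemma map_sgen (f : G →* H) (x y : G) : ∀ j, f (sgen x y j) = sgen (f x) (f y) j
  | 0 | 1 => map_one f
  | 2 => map_comm' f y x
  | n + 3 => by rw [sgen, sgen, map_comm', map_sgen f x y (n + 2)]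

lemma map_tgenD (f : G →* H) (x y : G) (j : ℕ) : f (tgenD x y j) = tgenD (f x) (f y) j := by
  rw [tgenD, tgenD, map_comm', map_sgen]

lemma closure_pair_map_eq_top {f : G →* H} (hf : Function.Surjective f) {x y : G}
    (h : closure {x, y} = ⊤) : closure {f x, f y} = ⊤ := by
  rw [← Set.image_pair, ← MonoidHom.map_closure, h, map_top_of_surjective f hf]

lemma nonempty_abelianization_mulEquiv {A : Type*} [CommGroup A] {f : G →* A}
    (hf : Function.Surjective f) (hker : f.ker = commutator G) :
    Nonempty (Abelianization G ≃* A) :=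
  ⟨(QuotientGroup.quotientMulEquivOfEq hker.symm).trans
    (QuotientGroup.quotientKerEquivOfSurjective f hf)⟩

/-- Dividing out a subgroup of the commutator subgroup does not change the abelianization. -/
def abelianizationQuotientEquiv (N : Subgroup G) [N.Normal] (hN : N ≤ commutator G) :
    Abelianization (G ⧸ N) ≃* Abelianization G :=
  MonoidHom.toMulEquiv
    (Abelianization.lift (QuotientGroup.lift N Abelianization.of
      (hN.trans (Abelianization.ker_of G).ge)))
    (Abelianization.map (QuotientGroup.mk' N))
    (by ext; rfl) (by ext; rfl)

lemma isSigmaGroup_of_ker_eq_commutator {f : G →* H} (hker : f.ker = commutator G) (σ : G ≃* G)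
    (hσ : ∀ g, f (σ g) = (f g)⁻¹) : IsSigmaGroup G := by
  refine ⟨σ, fun g => ?_⟩
  have hmem : σ g * g ∈ commutator G := by
    rw [← hker, MonoidHom.mem_ker, map_mul, hσ, inv_mul_cancel]
  rwa [← Abelianization.ker_of, MonoidHom.mem_ker, map_mul, mul_eq_one_iff_eq_inv] at hmem

lemma IsSigmaGroup.quotient (h : IsSigmaGroup G) (N : Subgroup G) [N.Characteristic] :
    IsSigmaGroup (G ⧸ N) := by
  obtain ⟨σ, hσ⟩ := h
  refine ⟨QuotientGroup.congr N N σ (characteristic_iff_map_eq.1 ‹_› σ), fun m => ?_⟩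
  obtain ⟨g, rfl⟩ := QuotientGroup.mk_surjective m
  have h := congrArg (Abelianization.map (QuotientGroup.mk' N)) (hσ g)
  rwa [map_inv, Abelianization.map_of, Abelianization.map_of] at h

lemma derivedSeries_quotient_self (n : ℕ) : derivedSeries (G ⧸ derivedSeries G n) n = ⊥ := by
  rw [← map_derivedSeries_eq (QuotientGroup.mk'_surjective (derivedSeries G n)) n,
    QuotientGroup.map_mk'_self]

end GroupTheory

/-- An alternating bi-additive form `A × A → C`, together with an action of the additive group
`A × C` on `A` that preserves the form, is unchanged when the point `(a, c)` is moved by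
`a ↦ act p • a`, and is trivial at the values of the form. These are the data that twist the
Heisenberg product on `A × C` by the action. -/
structure TwistedForm (A C S : Type*) [AddCommGroup A] [AddCommGroup C] [Group S]
    [DistribMulAction S A] where
  act : AddChar (A × C) S
  form : A →+ A →+ C
  form_self (a : A) : form a a = 0
  form_smul_smul (p : A × C) (a b : A) : form (act p • a) (act p • b) = form a b
  act_smul (p : A × C) (a : A) : act (act p • a, 0) = act (a, 0)
  act_form (a b : A) : act (0, form a b) = 1

/-- The group on `A × C` with product `(a, c) (b, d) = (a + u • b, c + d + form a (u • b))`,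
where `u = act (a, c)`. -/
@[ext]
structure TwistedForm.Ext {A C S : Type*} [AddCommGroup A] [AddCommGroup C] [Group S]
    [DistribMulAction S A] (F : TwistedForm A C S) where
  fst : A
  snd : C

namespace TwistedForm

variable {A C S : Type*} [AddCommGroup A] [AddCommGroup C] [Group S] [DistribMulAction S A]
  (F : TwistedForm A C S)

lemma form_swap (a b : A) : F.form b a = -F.form a b := by
  have h := F.form_self (a + b)
  simp only [map_add, AddMonoidHom.add_apply, form_self, zero_add, add_zero] at h
  exact eq_neg_of_add_eq_zero_left h

lemma act_smul_mk (p : A × C) (a : A) (c : C) : F.act (F.act p • a, c) = F.act (a, c) := by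
  have split (b : A) : (b, c) = (b, 0) + (0, c) := by rw [Prod.mk_add_mk, add_zero, zero_add]
  rw [split, AddChar.map_add_eq_mul, F.act_smul, ← AddChar.map_add_eq_mul, ← split]

variable {F}

namespace Ext

/-- The element of `S` through which a group element acts on `A`. -/
def op (g : F.Ext) : S := F.act (g.fst, g.snd)

instance : Mul F.Ext where
  mul g h := ⟨g.fst + g.op • h.fst, g.snd + h.snd + F.form g.fst (g.op • h.fst)⟩

instance : One F.Ext where
  one := ⟨0, 0⟩

instance : Inv F.Ext where
  inv g := ⟨-(g.op⁻¹ • g.fst), -g.snd⟩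

lemma mul_fst (g h : F.Ext) : (g * h).fst = g.fst + g.op • h.fst := rfl

lemma mul_snd (g h : F.Ext) :
    (g * h).snd = g.snd + h.snd + F.form g.fst (g.op • h.fst) := rfl

lemma one_fst : (1 : F.Ext).fst = 0 := rfl

lemma one_snd : (1 : F.Ext).snd = 0 := rfl

lemma op_one : (1 : F.Ext).op = 1 := AddChar.map_zero_eq_one _

lemma op_mul (g h : F.Ext) : (g * h).op = g.op * h.op := by
  have split : ((g * h).fst, (g * h).snd) = (g.fst, g.snd) + (g.op • h.fst, h.snd) +
      (0, F.form g.fst (g.op • h.fst)) := by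
    simp only [mul_fst, mul_snd, Prod.mk_add_mk, add_zero]
  rw [op, split, AddChar.map_add_eq_mul, AddChar.map_add_eq_mul, F.act_form, mul_one, op,
    F.act_smul_mk, op]

lemma op_inv (g : F.Ext) : (g⁻¹).op = g.op⁻¹ := by
  have hop : g.op⁻¹ = F.act (-(g.fst, g.snd)) := (AddChar.map_neg_eq_inv _ _).symm
  change F.act (-(g.op⁻¹ • g.fst), -g.snd) = _
  rw [hop, ← smul_neg, F.act_smul_mk, Prod.neg_mk]

lemma form_op_smul (g : F.Ext) (a b : A) : F.form (g.op • a) (g.op • b) = F.form a b :=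
  F.form_smul_smul _ a b

instance : Group F.Ext where
  mul_assoc g h k := by
    ext
    · simp only [mul_fst, op_mul, mul_smul, smul_add, add_assoc]
    · simp only [mul_fst, mul_snd, op_mul, mul_smul, smul_add, map_add, AddMonoidHom.add_apply,
        form_op_smul]
      abel
  one_mul g := by
    ext
    · rw [mul_fst, op_one, one_fst, one_smul, zero_add]
    · rw [mul_snd, one_fst, one_snd, map_zero, AddMonoidHom.zero_apply, zero_add, add_zero]
  mul_one g := by
    ext
    · rw [mul_fst, one_fst, smul_zero, add_zero]
    · rw [mul_snd, one_fst, one_snd, smul_zero, map_zero, add_zero, add_zero]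
  inv_mul_cancel g := by
    have hfst : (g⁻¹).op • g.fst = -(g⁻¹).fst := by
      rw [op_inv]
      exact (neg_neg _).symm
    ext
    · rw [mul_fst, hfst, one_fst, add_neg_cancel]
    · rw [mul_snd, hfst, map_neg, F.form_self, neg_zero, add_zero, one_snd]
      exact neg_add_cancel g.snd

lemma comm'_eq (g h : F.Ext) :
    comm' g h = ⟨(h.op * g.op)⁻¹ • (g.fst + g.op • h.fst - (h.fst + h.op • g.fst)),
      F.form g.fst (g.op • h.fst) - F.form h.fst (h.op • g.fst) -
        F.form (h.fst + h.op • g.fst) (g.fst + g.op • h.fst)⟩ := by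
  apply comm'_eq_of_mul_eq
  ext
  · rw [mul_fst (h * g), op_mul, smul_inv_smul, mul_fst, mul_fst, add_sub_cancel]
  · rw [mul_snd (h * g), op_mul, smul_inv_smul, mul_fst h g, map_sub, F.form_self, mul_snd,
      mul_snd]
    dsimp only
    abel

lemma comm'_eq_of_op_eq_one {g : F.Ext} (hg : g.op = 1) (h : F.Ext) :
    comm' g h = ⟨h.op⁻¹ • g.fst - g.fst,
      2 • F.form g.fst h.fst + F.form g.fst (h.op • g.fst)⟩ := by
  rw [comm'_eq, hg, mul_one, one_smul]
  ext
  · rw [add_comm g.fst, add_sub_add_left_eq_sub, smul_sub, inv_smul_smul]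
  · simp only [map_add, AddMonoidHom.add_apply, F.form_self, F.form_swap g.fst,
      F.form_swap (h.op • g.fst) h.fst]
    abel

lemma mk_zero_pow (c : C) (k : ℕ) : (⟨0, c⟩ : F.Ext) ^ k = ⟨0, k • c⟩ := by
  induction k with
  | zero => rw [pow_zero, zero_nsmul]; rfl
  | succ k ih =>
    ext
    · rw [pow_succ, ih, mul_fst, smul_zero, add_zero]
    · rw [pow_succ, ih, mul_snd, smul_zero, map_zero, add_zero, succ_nsmul]

/-- The automorphism `(a, c) ↦ (τ a, -c)` given by an additive automorphism `τ` of `A` that negates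
the form and turns the action of `(a, c)` into that of `(τ a, -c)`. -/
def negEquiv (τ : A ≃+ A) (hform : ∀ a b, F.form (τ a) (τ b) = -F.form a b)
    (hact : ∀ a c b, τ (F.act (a, c) • b) = F.act (τ a, -c) • τ b) : F.Ext ≃* F.Ext where
  toFun g := ⟨τ g.fst, -g.snd⟩
  invFun g := ⟨τ.symm g.fst, -g.snd⟩
  left_inv g := by simp only [AddEquiv.symm_apply_apply, neg_neg]
  right_inv g := by simp only [AddEquiv.apply_symm_apply, neg_neg]
  map_mul' g h := by
    have hop : (⟨τ g.fst, -g.snd⟩ : F.Ext).op • τ h.fst = τ (g.op • h.fst) :=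
      (hact g.fst g.snd h.fst).symm
    ext
    · rw [mul_fst, mul_fst, hop, map_add]
    · rw [mul_snd, mul_snd, hop, hform, neg_add, neg_add]

variable (F) in
/-- The underlying set of the group is `A × C`. -/
def equivProd : F.Ext ≃ A × C where
  toFun g := (g.fst, g.snd)
  invFun p := ⟨p.1, p.2⟩

instance [Finite A] [Finite C] : Finite F.Ext := .of_equiv _ (equivProd F).symm

lemma natCard_eq : Nat.card F.Ext = Nat.card A * Nat.card C := by
  rw [Nat.card_congr (equivProd F), Nat.card_prod]

end Ext

end TwistedForm
/-- The ring `ℤ[ω] / (π ^ 7)`, where `ω` is a primitive cube root of unity and `π = ω - 1`. Its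
elements are `re + im * π` with `π ^ 2 = -3 - 3 * π`, and `π ^ 7 = 27 * π` up to a unit. -/
@[ext]
structure EisensteinQuot where
  re : ZMod 81
  im : ZMod 27
  deriving DecidableEq

namespace EisensteinQuot

/-- Reduction of `ℤ/81` modulo `27`. -/
def reduce : ZMod 81 →+* ZMod 27 := ZMod.castHom (by decide) _

/-- Multiplication by `3`, as a map from `ℤ/27` to `ℤ/81`. -/
def triple : ZMod 27 →+ ZMod 81 :=
  ZMod.lift 27 ⟨zmultiplesHom (ZMod 81) 3, by decide +kernel⟩

lemma reduce_triple (b : ZMod 27) : reduce (triple b) = 3 * b := by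
  revert b; decide +kernel

lemma mul_triple (a : ZMod 81) (b : ZMod 27) : a * triple b = triple (reduce a * b) := by
  revert a b; decide +kernel

lemma triple_mul (b : ZMod 27) (a : ZMod 81) : triple b * a = triple (b * reduce a) := by
  rw [mul_comm, mul_triple, mul_comm]

instance : Zero EisensteinQuot := ⟨⟨0, 0⟩⟩
instance : One EisensteinQuot := ⟨⟨1, 0⟩⟩
instance : Add EisensteinQuot := ⟨fun z w => ⟨z.re + w.re, z.im + w.im⟩⟩
instance : Neg EisensteinQuot := ⟨fun z => ⟨-z.re, -z.im⟩⟩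
instance : Sub EisensteinQuot := ⟨fun z w => ⟨z.re - w.re, z.im - w.im⟩⟩
instance : Mul EisensteinQuot := ⟨fun z w => ⟨z.re * w.re - triple (z.im * w.im),
  reduce z.re * w.im + z.im * reduce w.re - 3 * z.im * w.im⟩⟩
instance : Star EisensteinQuot := ⟨fun z => ⟨z.re - triple z.im, -z.im⟩⟩

@[simp] lemma zero_re : (0 : EisensteinQuot).re = 0 := rfl
@[simp] lemma zero_im : (0 : EisensteinQuot).im = 0 := rfl
@[simp] lemma one_re : (1 : EisensteinQuot).re = 1 := rfl
@[simp] lemma one_im : (1 : EisensteinQuot).im = 0 := rfl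
@[simp] lemma add_re (z w : EisensteinQuot) : (z + w).re = z.re + w.re := rfl
@[simp] lemma add_im (z w : EisensteinQuot) : (z + w).im = z.im + w.im := rfl
@[simp] lemma neg_re (z : EisensteinQuot) : (-z).re = -z.re := rfl
@[simp] lemma neg_im (z : EisensteinQuot) : (-z).im = -z.im := rfl
@[simp] lemma sub_re (z w : EisensteinQuot) : (z - w).re = z.re - w.re := rfl
@[simp] lemma sub_im (z w : EisensteinQuot) : (z - w).im = z.im - w.im := rfl
@[simp] lemma mul_re (z w : EisensteinQuot) :
    (z * w).re = z.re * w.re - triple (z.im * w.im) := rfl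
@[simp] lemma mul_im (z w : EisensteinQuot) :
    (z * w).im = reduce z.re * w.im + z.im * reduce w.re - 3 * z.im * w.im := rfl
@[simp] lemma star_re (z : EisensteinQuot) : (star z).re = z.re - triple z.im := rfl
@[simp] lemma star_im (z : EisensteinQuot) : (star z).im = -z.im := rfl

instance : AddCommGroup EisensteinQuot where
  add_assoc _ _ _ := by ext <;> simp [add_assoc]
  zero_add _ := by ext <;> simp
  add_zero _ := by ext <;> simp
  neg_add_cancel _ := by ext <;> simp
  sub_eq_add_neg _ _ := by ext <;> simp [sub_eq_add_neg]
  add_comm _ _ := by ext <;> simp [add_comm]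
  nsmul := nsmulRec
  zsmul := zsmulRec

instance : CommRing EisensteinQuot where
  __ := (inferInstance : AddCommGroup EisensteinQuot)
  mul_comm z w := by
    ext
    · rw [mul_re, mul_re, mul_comm z.re, mul_comm z.im]
    · simp only [mul_im]
      ring
  mul_assoc z w v := by
    ext
    · simp only [mul_re, mul_im, mul_sub, sub_mul, mul_triple, triple_mul, map_sub, mul_add,
        add_mul, map_add]
      ring_nf
    · simp only [mul_re, mul_im, map_sub, map_mul, reduce_triple]
      ring
  one_mul _ := by ext <;> simp
  mul_one _ := by ext <;> simp
  zero_mul _ := by ext <;> simp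
  mul_zero _ := by ext <;> simp
  left_distrib _ _ _ := by
    ext
    · simp only [mul_re, add_re, add_im, mul_add, map_add]
      ring
    · simp only [mul_im, add_re, add_im, map_add]
      ring
  right_distrib _ _ _ := by
    ext
    · simp only [mul_re, add_re, add_im, add_mul, map_add]
      ring
    · simp only [mul_im, add_re, add_im, map_add]
      ring

instance : StarRing EisensteinQuot where
  star_involutive _ := by ext <;> simp
  star_mul z w := by
    ext
    · simp only [star_re, star_im, mul_re, mul_im, mul_sub, sub_mul, mul_triple, triple_mul,
        reduce_triple, map_sub, map_add, neg_mul_neg]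
      ring_nf
    · simp only [star_re, star_im, mul_im, map_sub, reduce_triple]
      ring
  star_add _ _ := by
    ext
    · simp only [star_re, add_re, add_im, map_add]
      ring
    · simp only [star_im, add_im, neg_add]

/-- The coordinates with respect to the basis `1, π`. -/
def equivProd : EisensteinQuot ≃ ZMod 81 × ZMod 27 where
  toFun z := (z.re, z.im)
  invFun p := ⟨p.1, p.2⟩

instance : Finite EisensteinQuot := .of_equiv _ equivProd.symm

lemma natCard_eq : Nat.card EisensteinQuot = 3 ^ 7 := by
  rw [Nat.card_congr equivProd, Nat.card_prod, Nat.card_zmod, Nat.card_zmod]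
  norm_num

/-- Reduction modulo `π`. -/
def aug : EisensteinQuot →+* ZMod 3 where
  toFun z := ZMod.castHom (by decide) (ZMod 3) z.re
  map_one' := map_one _
  map_zero' := map_zero _
  map_add' _ _ := map_add _ _ _
  map_mul' z w := by
    have castHom_triple (b : ZMod 27) :
        ZMod.castHom (by decide : 3 ∣ 81) (ZMod 3) (triple b) = 0 := by
      revert b; decide +kernel
    rw [mul_re, map_sub, map_mul, castHom_triple, sub_zero]

lemma aug_star (z : EisensteinQuot) : aug (star z) = aug z := by
  have h : ∀ (a : ZMod 81) (b : ZMod 27), aug ⟨a - triple b, -b⟩ = aug ⟨a, b⟩ := by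
    decide +kernel
  exact h z.re z.im

/-- The alternating form whose value at `z, w` is the `π`-coordinate of `z * star w`. -/
def imForm : EisensteinQuot →+ EisensteinQuot →+ ZMod 27 :=
  AddMonoidHom.mk'
    (fun z => AddMonoidHom.mk' (fun w => (z * star w).im) fun w v => by
      rw [star_add, mul_add, add_im])
    fun z w => by ext v; exact congrArg im (add_mul z w (star v))

lemma imForm_apply (z w : EisensteinQuot) :
    imForm z w = z.im * reduce w.re - reduce z.re * w.im := by
  simp only [imForm, AddMonoidHom.mk'_apply, mul_im, star_re, star_im, map_sub, reduce_triple]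
  ring

lemma imForm_self (z : EisensteinQuot) : imForm z z = 0 := by
  rw [imForm_apply]
  ring

lemma imForm_smul_smul (u : unitary EisensteinQuot) (z w : EisensteinQuot) :
    imForm (u • z) (u • w) = imForm z w := by
  have h : (u : EisensteinQuot) * z * star (u * w) = z * star w := by
    rw [star_mul]
    linear_combination z * star w * Unitary.coe_mul_star_self u
  exact congrArg im h

lemma imForm_star_star (z w : EisensteinQuot) : imForm (star z) (star w) = -imForm z w := by
  simp only [imForm_apply, star_re, star_im, map_sub, reduce_triple]
  ring

lemma three_dvd_imForm {z w : EisensteinQuot} (hz : aug z = 0) (hw : aug w = 0) :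
    ∃ d, imForm z w = 3 * d := by
  have h : ∀ a : ZMod 81, aug ⟨a, 0⟩ = 0 → ∃ d, reduce a = 3 * d := by decide +kernel
  obtain ⟨d, hd⟩ := h z.re hz
  obtain ⟨d', hd'⟩ := h w.re hw
  exact ⟨z.im * d' - d * w.im, by rw [imForm_apply, hd, hd']; ring⟩

-- The two elements are the first coordinates of the commutators `s₂` and `s₃` below.
lemma exists_nsmul_add_nsmul {z : EisensteinQuot} (hz : aug z = 0) :
    ∃ j k : ℕ, j • ⟨57, 2⟩ + k • ⟨78, 24⟩ = z := by
  have h₁ : ∀ a : ZMod 81, aug ⟨a, 0⟩ = 0 → ∃ d, a = triple d := by decide +kernel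
  have h₂ : ∀ d b : ZMod 27, (3 * d - b).val • (⟨57, 2⟩ : EisensteinQuot) +
      (2 * d + 8 * b).val • ⟨78, 24⟩ = ⟨triple d, b⟩ := by decide +kernel
  obtain ⟨d, hd⟩ := h₁ z.re hz
  exact ⟨_, _, (h₂ d z.im).trans (EisensteinQuot.ext hd.symm rfl)⟩

/-- The cube root of unity `1 + π`. -/
def omega : unitary EisensteinQuot :=
  ⟨⟨1, 1⟩, Unitary.mem_iff.2 (by decide +kernel)⟩

/-- The cube root of unity `(1 - 9 √-3) ω`, where `√-3 = 3 + 2 π`. -/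
def eta : unitary EisensteinQuot :=
  ⟨⟨28, 10⟩, Unitary.mem_iff.2 (by decide +kernel)⟩

lemma omega_pow_three : omega ^ 3 = 1 := by decide +kernel

lemma eta_pow_three : eta ^ 3 = 1 := by decide +kernel

lemma aug_unitary_pow (k m : ℕ) :
    aug ((eta ^ k * omega ^ m : unitary EisensteinQuot) : EisensteinQuot) = 1 := by
  have heta : aug (eta : EisensteinQuot) = 1 := by decide +kernel
  have homega : aug (omega : EisensteinQuot) = 1 := by decide +kernel
  simp only [Submonoid.coe_mul, SubmonoidClass.coe_pow, map_mul, map_pow, heta, homega, one_pow,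
    mul_one]

end EisensteinQuot

open EisensteinQuot

namespace D5Group

/-- Reduction of `ℤ/3^(e+3)` modulo `3`. -/
def modThree (e : ℕ) : ZMod (3 ^ (e + 3)) →+* ZMod 3 :=
  ZMod.castHom (dvd_pow_self 3 (e + 2).succ_ne_zero) _

/-- Reduction of `ℤ/3^(e+3)` modulo `3^e`. -/
def modPow (e : ℕ) : ZMod (3 ^ (e + 3)) →+* ZMod (3 ^ e) :=
  ZMod.castHom (pow_dvd_pow 3 (e.le_add_right 3)) _

/-- The embedding of `ℤ/27` into `ℤ/3^(e+3)`, multiplied by the sign `l`. -/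
def embed (e : ℕ) (l : ℤˣ) : ZMod 27 →+ ZMod (3 ^ (e + 3)) :=
  ZMod.lift 27 ⟨zmultiplesHom _ (((l : ℤ) * 3 ^ e : ℤ) : ZMod (3 ^ (e + 3))), by
    rw [zmultiplesHom_apply, zsmul_eq_mul, ← Int.cast_mul, ZMod.intCast_zmod_eq_zero_iff_dvd]
    exact ⟨l, by push_cast; ring⟩⟩

variable {e : ℕ} {l : ℤˣ}

lemma embed_intCast (k : ℤ) : embed e l k = ((l * 3 ^ e * k : ℤ) : ZMod (3 ^ (e + 3))) := by
  rw [embed, ZMod.lift_coe, zmultiplesHom_apply, zsmul_eq_mul, ← Int.cast_mul, mul_comm]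

lemma embed_injective : Function.Injective (embed e l) := by
  refine (injective_iff_map_eq_zero _).2 fun c hc => ?_
  obtain ⟨k, rfl⟩ := ZMod.intCast_surjective c
  rw [embed_intCast, ZMod.intCast_zmod_eq_zero_iff_dvd, mul_assoc, l.isUnit.dvd_mul_left,
    Nat.cast_pow, pow_add] at hc
  rw [ZMod.intCast_zmod_eq_zero_iff_dvd]
  exact Int.dvd_of_mul_dvd_mul_left (by positivity) hc

lemma modPow_eq_zero_iff {n : ZMod (3 ^ (e + 3))} :
    modPow e n = 0 ↔ ∃ c, n = embed e l c := by
  constructor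
  · intro h
    obtain ⟨k, rfl⟩ := ZMod.intCast_surjective n
    rw [map_intCast, ZMod.intCast_zmod_eq_zero_iff_dvd] at h
    obtain ⟨c, rfl⟩ := h
    refine ⟨((l * c : ℤ) : ZMod 27), ?_⟩
    rw [embed_intCast, mul_right_comm, ← mul_assoc, Int.units_coe_mul_self, one_mul, mul_comm,
      Nat.cast_pow, Nat.cast_ofNat]
  · rintro ⟨c, rfl⟩
    obtain ⟨k, rfl⟩ := ZMod.intCast_surjective c
    rw [embed_intCast, map_intCast, ZMod.intCast_zmod_eq_zero_iff_dvd, Nat.cast_pow]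
    exact (dvd_mul_left _ _).mul_right _

lemma modThree_embed (he : e ≠ 0) (c : ZMod 27) : modThree e (embed e l c) = 0 := by
  obtain ⟨k, rfl⟩ := ZMod.intCast_surjective c
  rw [embed_intCast, map_intCast, ZMod.intCast_zmod_eq_zero_iff_dvd]
  exact ((dvd_pow_self 3 he).mul_left _).mul_right _

/-- The character of `ℤ[ω] / (π ^ 7) × ℤ/3^(e+3)` whose value at `(z, n)` is
`eta ^ z * omega ^ n`, where the exponents are taken modulo `π` and `3`. -/
def unitAction (e : ℕ) : AddChar (EisensteinQuot × ZMod (3 ^ (e + 3))) (unitary EisensteinQuot) :=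
  (AddChar.zmodChar 3 eta_pow_three).compAddMonoidHom
      (aug.toAddMonoidHom.comp (AddMonoidHom.fst _ _)) *
    (AddChar.zmodChar 3 omega_pow_three).compAddMonoidHom
      ((modThree e).toAddMonoidHom.comp (AddMonoidHom.snd _ _))

lemma unitAction_apply (z : EisensteinQuot) (n : ZMod (3 ^ (e + 3))) :
    unitAction e (z, n) = eta ^ (aug z).val * omega ^ (modThree e n).val := rfl

lemma aug_unitAction_smul (p : EisensteinQuot × ZMod (3 ^ (e + 3))) (z : EisensteinQuot) :
    aug (unitAction e p • z) = aug z := by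
  rw [Submonoid.smul_def, smul_eq_mul, map_mul, unitAction_apply, aug_unitary_pow, one_mul]

lemma star_unitAction (z : EisensteinQuot) (n : ZMod (3 ^ (e + 3))) :
    star (unitAction e (z, n)) = unitAction e (-star z, -n) := by
  have h : unitAction e (-star z, -n) = unitAction e (-(z, n)) := by
    rw [Prod.neg_mk, unitAction_apply, unitAction_apply, map_neg aug, map_neg aug, aug_star]
  rw [h, AddChar.map_neg_eq_inv, Unitary.star_eq_inv]

/-- The twisted form on `ℤ[ω] / (π ^ 7)` that defines the group of type D.5. -/
def twistedForm (e : ℕ) [e.AtLeastTwo] (l : ℤˣ) :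
    TwistedForm EisensteinQuot (ZMod (3 ^ (e + 3))) (unitary EisensteinQuot) where
  act := unitAction e
  form := imForm.compr₂ (embed e l)
  form_self z := by
    rw [AddMonoidHom.compr₂_apply, imForm_self, map_zero]
  form_smul_smul p z w := congrArg (embed e l) (imForm_smul_smul _ z w)
  act_smul p z := by
    rw [unitAction_apply (_ • z), aug_unitAction_smul, unitAction_apply z]
  act_form z w := by
    rw [AddMonoidHom.compr₂_apply, unitAction_apply, modThree_embed (NeZero.ne e), map_zero,
      ZMod.val_zero, pow_zero, pow_zero, one_mul]

end D5Group

/-- The group of type D.5 with abelianization `ℤ/3^e × ℤ/3`; the sign `l` distinguishes the two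
groups with `i = 2` and `i = 3`. -/
abbrev D5Group (e : ℕ) [e.AtLeastTwo] (l : ℤˣ) : Type := (D5Group.twistedForm e l).Ext

namespace D5Group

variable {e : ℕ} [e.AtLeastTwo] {l : ℤˣ}

lemma op_eq (g : D5Group e l) : g.op = unitAction e (g.fst, g.snd) := rfl

lemma form_eq (z w : EisensteinQuot) : (twistedForm e l).form z w = embed e l (imForm z w) := rfl

variable (e l) in
/-- The generator `x`. -/
def x : D5Group e l := ⟨0, 1⟩

variable (e l) in
/-- The generator `y`. Its second coordinate is chosen so that `y ^ 3` lies in the commutator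
subgroup, with a second coordinate `embed e l c` for which `3 ∣ c`. -/
def y : D5Group e l := ⟨1, ((l * 3 ^ (e - 1) : ℤ) : ZMod (3 ^ (e + 3)))⟩

/-- When `aug z = 0`, these are the elements of the commutator subgroup. -/
def kerElt (e : ℕ) [e.AtLeastTwo] (l : ℤˣ) (z : EisensteinQuot) (c : ZMod 27) : D5Group e l :=
  ⟨z, embed e l c⟩

lemma op_x : (x e l).op = omega := by
  have : Fact (1 < 3) := ⟨by decide⟩
  rw [op_eq, x, unitAction_apply, map_zero, map_one, ZMod.val_zero, ZMod.val_one, pow_zero,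
    pow_one, one_mul]

lemma op_y : (y e l).op = eta := by
  have : Fact (1 < 3) := ⟨by decide⟩
  have h : modThree e ((l * 3 ^ (e - 1) : ℤ) : ZMod (3 ^ (e + 3))) = 0 := by
    rw [map_intCast, ZMod.intCast_zmod_eq_zero_iff_dvd]
    exact (dvd_pow_self 3 (Nat.sub_ne_zero_of_lt Nat.AtLeastTwo.one_lt)).mul_left _
  rw [op_eq, y, unitAction_apply, h, map_one, ZMod.val_zero, ZMod.val_one, pow_zero,
    pow_one, mul_one]

lemma op_kerElt {z : EisensteinQuot} (hz : aug z = 0) (c : ZMod 27) : (kerElt e l z c).op = 1 := by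
  rw [op_eq, kerElt, unitAction_apply, hz, modThree_embed (NeZero.ne e), ZMod.val_zero, pow_zero,
    pow_zero, one_mul]

lemma kerElt_mul {z : EisensteinQuot} (hz : aug z = 0) (w : EisensteinQuot) (c d : ZMod 27) :
    kerElt e l z c * kerElt e l w d = kerElt e l (z + w) (c + d + imForm z w) := by
  ext : 1
  · rw [TwistedForm.Ext.mul_fst, op_kerElt hz, one_smul]
    rfl
  · rw [TwistedForm.Ext.mul_snd, op_kerElt hz, one_smul, form_eq]
    simp only [kerElt, map_add]

lemma kerElt_zero : kerElt e l 0 0 = 1 := by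
  rw [kerElt, map_zero]; rfl

lemma kerElt_pow {z : EisensteinQuot} (hz : aug z = 0) (c : ZMod 27) (k : ℕ) :
    kerElt e l z c ^ k = kerElt e l (k • z) (k • c) := by
  induction k with
  | zero => rw [pow_zero, zero_nsmul, zero_nsmul, kerElt_zero]
  | succ k ih =>
    rw [pow_succ, ih, kerElt_mul (by rw [map_nsmul, hz, smul_zero]), map_nsmul,
      AddMonoidHom.nsmul_apply, imForm_self, smul_zero, add_zero, succ_nsmul, succ_nsmul]

lemma comm'_kerElt {z : EisensteinQuot} (hz : aug z = 0) (c : ZMod 27) (h : D5Group e l) :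
    comm' (kerElt e l z c) h = kerElt e l (star (h.op : EisensteinQuot) * z - z)
      (2 • imForm z h.fst + imForm z (h.op * z)) := by
  rw [TwistedForm.Ext.comm'_eq_of_op_eq_one (op_kerElt hz c), ← Unitary.star_eq_inv]
  ext : 1
  · rfl
  · simp only [kerElt, map_add, map_nsmul]
    rfl

lemma comm'_kerElt_x {z : EisensteinQuot} (hz : aug z = 0) (c : ZMod 27) :
    comm' (kerElt e l z c) (x e l) =
      kerElt e l (star (omega : EisensteinQuot) * z - z) (imForm z (omega * z)) := by
  rw [comm'_kerElt hz, op_x, x, map_zero, smul_zero, zero_add]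

lemma comm'_kerElt_y {z : EisensteinQuot} (hz : aug z = 0) (c : ZMod 27) :
    comm' (kerElt e l z c) (y e l) =
      kerElt e l (star (eta : EisensteinQuot) * z - z)
        (2 • imForm z 1 + imForm z (eta * z)) := by
  rw [comm'_kerElt hz, op_y, y]

lemma comm'_kerElt_kerElt {z w : EisensteinQuot} (hz : aug z = 0) (hw : aug w = 0)
    (c d : ZMod 27) :
    comm' (kerElt e l z c) (kerElt e l w d) = kerElt e l 0 (2 • imForm z w) := by
  rw [comm'_kerElt hz, op_kerElt hw, Submonoid.coe_one, star_one, one_mul, sub_self, imForm_self,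
    add_zero]
  rfl

lemma x_pow : x e l ^ 3 ^ e = kerElt e l 0 l := by
  have h : embed e l l = ((3 ^ e : ℕ) : ZMod (3 ^ (e + 3))) := by
    rw [embed_intCast, mul_right_comm, Int.units_coe_mul_self, one_mul]
    push_cast
    rfl
  rw [x, TwistedForm.Ext.mk_zero_pow, nsmul_one, kerElt, h]

lemma y_pow_three : y e l ^ 3 = kerElt e l 27 (-9) := by
  have hsnd : ((l * 3 ^ (e - 1) : ℤ) : ZMod (3 ^ (e + 3))) + (l * 3 ^ (e - 1) : ℤ) +
      (l * 3 ^ (e - 1) : ℤ) = embed e l 1 := by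
    have he : (3 : ℤ) ^ e = 3 ^ (e - 1) * 3 := (pow_sub_one_mul (NeZero.ne e) 3).symm
    rw [← Int.cast_one, embed_intCast, mul_one, ← Int.cast_add, ← Int.cast_add, he]
    congr 1
    ring
  rw [pow_three']
  ext : 1
  · simp only [TwistedForm.Ext.mul_fst, TwistedForm.Ext.op_mul, op_y]
    change 1 + eta • 1 + (eta * eta) • (1 : EisensteinQuot) = 27
    decide +kernel
  · simp only [TwistedForm.Ext.mul_fst, TwistedForm.Ext.mul_snd, TwistedForm.Ext.op_mul, op_y,
      form_eq]
    simp only [y, kerElt]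
    rw [add_right_comm _ (embed e l _), hsnd, add_assoc, ← map_add, ← map_add]
    exact congrArg _ (by decide +kernel)

lemma sgen_two : sgen (x e l) (y e l) 2 = kerElt e l ⟨57, 2⟩ (-1) := by
  rw [sgen, TwistedForm.Ext.comm'_eq, op_x, op_y, x, y]
  ext : 1
  · change (omega * eta)⁻¹ • (1 + eta • 0 - (0 + omega • (1 : EisensteinQuot))) = ⟨57, 2⟩
    decide +kernel
  · simp only [form_eq, ← map_sub]
    exact congrArg _ (by decide +kernel)

lemma sgen_three : sgen (x e l) (y e l) 3 = kerElt e l ⟨78, 24⟩ (-3) := by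
  rw [sgen, sgen_two, comm'_kerElt_x (by decide +kernel)]
  exact congrArg₂ _ (by decide +kernel) (by decide +kernel)

lemma sgen_four : sgen (x e l) (y e l) 4 = kerElt e l ⟨0, 3⟩ (-9) := by
  rw [sgen, sgen_three, comm'_kerElt_x (by decide +kernel)]
  exact congrArg₂ _ (by decide +kernel) (by decide +kernel)

lemma sgen_five : sgen (x e l) (y e l) 5 = kerElt e l ⟨9, 0⟩ 0 := by
  rw [sgen, sgen_four, comm'_kerElt_x (by decide +kernel)]
  exact congrArg₂ _ (by decide +kernel) (by decide +kernel)

lemma sgen_six : sgen (x e l) (y e l) 6 = kerElt e l ⟨54, 18⟩ 0 := by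
  rw [sgen, sgen_five, comm'_kerElt_x (by decide +kernel)]
  exact congrArg₂ _ (by decide +kernel) (by decide +kernel)

lemma sgen_seven : sgen (x e l) (y e l) 7 = kerElt e l ⟨54, 0⟩ 0 := by
  rw [sgen, sgen_six, comm'_kerElt_x (by decide +kernel)]
  exact congrArg₂ _ (by decide +kernel) (by decide +kernel)

lemma tgenD_three : tgenD (x e l) (y e l) 3 = kerElt e l ⟨51, 24⟩ 1 := by
  rw [tgenD, sgen_two, comm'_kerElt_y (by decide +kernel)]
  exact congrArg₂ _ (by decide +kernel) (by decide +kernel)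

lemma tgenD_four : tgenD (x e l) (y e l) 4 = kerElt e l ⟨0, 3⟩ 12 := by
  rw [tgenD, sgen_three, comm'_kerElt_y (by decide +kernel)]
  exact congrArg₂ _ (by decide +kernel) (by decide +kernel)

lemma tgenD_five : tgenD (x e l) (y e l) 5 = kerElt e l ⟨9, 0⟩ 6 := by
  rw [tgenD, sgen_four, comm'_kerElt_y (by decide +kernel)]
  exact congrArg₂ _ (by decide +kernel) (by decide +kernel)

lemma tgenD_six : tgenD (x e l) (y e l) 6 = kerElt e l ⟨54, 18⟩ 0 := by
  rw [tgenD, sgen_five, comm'_kerElt_y (by decide +kernel)]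
  exact congrArg₂ _ (by decide +kernel) (by decide +kernel)

lemma tgenD_seven : tgenD (x e l) (y e l) 7 = kerElt e l ⟨54, 0⟩ 9 := by
  rw [tgenD, sgen_six, comm'_kerElt_y (by decide +kernel)]
  exact congrArg₂ _ (by decide +kernel) (by decide +kernel)

lemma tgenD_three_eq_mul :
    tgenD (x e l) (y e l) 3 =
      sgen (x e l) (y e l) 3 * sgen (x e l) (y e l) 7 * kerElt e l 0 4 := by
  rw [tgenD_three, sgen_three, sgen_seven, kerElt_mul (by decide +kernel),
    kerElt_mul (by decide +kernel)]
  exact congrArg₂ _ (by decide +kernel) (by decide +kernel)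

end D5Group

namespace D5Group

variable {e : ℕ} [e.AtLeastTwo] {l : ℤˣ}

lemma kerElt_zero_mem {H : Subgroup (D5Group e l)} {u : ZMod 27} (hu : IsUnit u)
    (h : kerElt e l 0 u ∈ H) (c : ZMod 27) : kerElt e l 0 c ∈ H := by
  obtain ⟨v, rfl⟩ := hu
  have hpow := H.pow_mem h (c * ↑v⁻¹ : ZMod 27).val
  rwa [kerElt_pow (map_zero _), smul_zero, nsmul_eq_mul, ZMod.natCast_zmod_val,
    Units.inv_mul_cancel_right] at hpow

variable (e l) in
/-- The projection onto the abelianization. -/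
def toAb : D5Group e l →* Multiplicative (ZMod (3 ^ e) × ZMod 3) where
  toFun g := .ofAdd (modPow e g.snd, aug g.fst)
  map_one' := by
    rw [TwistedForm.Ext.one_fst, TwistedForm.Ext.one_snd, map_zero, map_zero]
    rfl
  map_mul' g h := by
    have hform : modPow e ((twistedForm e l).form g.fst (g.op • h.fst)) = 0 :=
      modPow_eq_zero_iff.2 ⟨_, rfl⟩
    rw [TwistedForm.Ext.mul_fst, TwistedForm.Ext.mul_snd, map_add, map_add, map_add, hform,
      add_zero, op_eq, aug_unitAction_smul]
    rfl

lemma toAb_apply (g : D5Group e l) : toAb e l g = .ofAdd (modPow e g.snd, aug g.fst) := rfl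

lemma mem_ker_toAb {g : D5Group e l} :
    g ∈ (toAb e l).ker ↔ ∃ z c, aug z = 0 ∧ g = kerElt e l z c := by
  rw [MonoidHom.mem_ker, toAb_apply, ofAdd_eq_one, Prod.mk_eq_zero, modPow_eq_zero_iff]
  constructor
  · rintro ⟨⟨c, hc⟩, hz⟩
    exact ⟨g.fst, c, hz, TwistedForm.Ext.ext rfl hc⟩
  · rintro ⟨z, c, hz, rfl⟩
    exact ⟨⟨c, rfl⟩, hz⟩

lemma ker_toAb_le {H : Subgroup (D5Group e l)} {c d u : ZMod 27} (hu : IsUnit u)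
    (hc : kerElt e l ⟨57, 2⟩ c ∈ H) (hd : kerElt e l ⟨78, 24⟩ d ∈ H)
    (hmem : kerElt e l 0 u ∈ H) : (toAb e l).ker ≤ H := by
  intro g hg
  obtain ⟨z, b, hz, rfl⟩ := mem_ker_toAb.1 hg
  obtain ⟨j, k, hjk⟩ := exists_nsmul_add_nsmul hz
  obtain ⟨a, ha⟩ : ∃ a, kerElt e l ⟨57, 2⟩ c ^ j * kerElt e l ⟨78, 24⟩ d ^ k = kerElt e l z a := by
    rw [kerElt_pow (by decide +kernel), kerElt_pow (by decide +kernel),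
      kerElt_mul (by rw [map_nsmul, (by decide +kernel : aug ⟨57, 2⟩ = 0), smul_zero]), hjk]
    exact ⟨_, rfl⟩
  have hsplit : kerElt e l z b = kerElt e l z a * kerElt e l 0 (b - a) := by
    rw [kerElt_mul hz, map_zero, add_zero, add_zero, add_sub_cancel]
  rw [hsplit, ← ha]
  exact H.mul_mem (H.mul_mem (H.pow_mem hc j) (H.pow_mem hd k)) (kerElt_zero_mem hu hmem _)

lemma map_toAb_closure : (closure {x e l, y e l}).map (toAb e l) = ⊤ := by
  have : NeZero (3 ^ e) := ⟨by positivity⟩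
  rw [eq_top_iff]
  rintro ⟨a, b⟩ -
  set m := modPow e (y e l).snd with hm
  have hx : x e l ∈ closure {x e l, y e l} := subset_closure (Set.mem_insert _ _)
  have hy : y e l ∈ closure {x e l, y e l} := subset_closure (Set.mem_insert_of_mem _ rfl)
  refine ⟨x e l ^ (a - b.val • m).val * y e l ^ b.val,
    mul_mem (pow_mem hx _) (pow_mem hy _), ?_⟩
  rw [map_mul, map_pow, map_pow, toAb_apply, toAb_apply, ← ofAdd_nsmul, ← ofAdd_nsmul,
    ← ofAdd_add, Prod.smul_mk, Prod.smul_mk, Prod.mk_add_mk, ← hm]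
  simp only [x, y, map_zero, map_one, nsmul_one, smul_zero, zero_add, ZMod.natCast_zmod_val,
    sub_add_cancel]
  rfl

lemma toAb_surjective : Function.Surjective (toAb e l) := by
  rw [← MonoidHom.range_eq_top, eq_top_iff, ← map_toAb_closure]
  exact map_le_range _ _

lemma isUnit_four : IsUnit (4 : ZMod 27) := (ZMod.isUnit_iff_coprime 4 27).2 (by decide)

lemma closure_x_y : closure {x e l, y e l} = ⊤ := by
  have hx : x e l ∈ closure {x e l, y e l} := subset_closure (Set.mem_insert _ _)
  have hy : y e l ∈ closure {x e l, y e l} := subset_closure (Set.mem_insert_of_mem _ rfl)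
  have h₂ : sgen (x e l) (y e l) 2 ∈ closure {x e l, y e l} := comm'_mem _ hy hx
  have h₃ : sgen (x e l) (y e l) 3 ∈ closure {x e l, y e l} := comm'_mem _ h₂ hx
  have hw := pow_mem hx (3 ^ e)
  rw [sgen_two] at h₂
  rw [sgen_three] at h₃
  rw [x_pow] at hw
  have hker := ker_toAb_le (l.isUnit.map (Int.castRingHom (ZMod 27))) h₂ h₃ hw
  rw [← comap_map_eq_self hker, map_toAb_closure, comap_top]

lemma ker_toAb : (toAb e l).ker = commutator (D5Group e l) := by
  refine le_antisymm ?_ (Abelianization.commutator_subset_ker _)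
  have h₂ : sgen (x e l) (y e l) 2 ∈ commutator (D5Group e l) :=
    comm'_mem_commutator (mem_top _) (mem_top _)
  have h₃ : sgen (x e l) (y e l) 3 ∈ commutator (D5Group e l) :=
    comm'_mem_commutator (mem_top _) (mem_top _)
  have h₇ : sgen (x e l) (y e l) 7 ∈ commutator (D5Group e l) :=
    comm'_mem_commutator (mem_top _) (mem_top _)
  have ht : tgenD (x e l) (y e l) 3 ∈ commutator (D5Group e l) :=
    comm'_mem_commutator (mem_top _) (mem_top _)
  rw [tgenD_three_eq_mul, mul_mem_cancel_left (mul_mem h₃ h₇)] at ht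
  rw [sgen_two] at h₂
  rw [sgen_three] at h₃
  exact ker_toAb_le isUnit_four h₂ h₃ ht

lemma nonempty_abelianization :
    Nonempty (Abelianization (D5Group e l) ≃* Multiplicative (ZMod (3 ^ e) × ZMod 3)) :=
  nonempty_abelianization_mulEquiv toAb_surjective ker_toAb

lemma isSigmaGroup : IsSigmaGroup (D5Group e l) := by
  let τ : EisensteinQuot ≃+ EisensteinQuot := starAddEquiv.trans (AddEquiv.neg _)
  refine isSigmaGroup_of_ker_eq_commutator ker_toAb
    (TwistedForm.Ext.negEquiv τ (fun z w => ?_) fun z n w => ?_) fun g => ?_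
  · change embed e l (imForm (-star z) (-star w)) = -embed e l (imForm z w)
    rw [map_neg imForm, AddMonoidHom.neg_apply, map_neg (imForm _), neg_neg, imForm_star_star,
      map_neg]
  · change -star ((unitAction e (z, n) : EisensteinQuot) * w) =
      (unitAction e (-star z, -n) : EisensteinQuot) * -star w
    rw [← star_unitAction, Unitary.coe_star, star_mul, mul_neg, mul_comm]
  · change Multiplicative.ofAdd (modPow e (-g.snd), aug (-star g.fst)) = (toAb e l g)⁻¹
    rw [map_neg, map_neg, aug_star]
    rfl

lemma natCard_eq : Nat.card (D5Group e l) = 3 ^ (10 + e) := by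
  rw [TwistedForm.Ext.natCard_eq, EisensteinQuot.natCard_eq, Nat.card_zmod]
  ring

lemma kerElt_three_mul_mem_zpowers (d : ZMod 27) :
    kerElt e l 0 (3 * d) ∈ zpowers (kerElt e l 0 3) := by
  refine ⟨d.val, ?_⟩
  dsimp only
  rw [zpow_natCast, kerElt_pow (map_zero _), smul_zero, nsmul_eq_mul, ZMod.natCast_zmod_val,
    mul_comm]

lemma derivedSeries_two : derivedSeries (D5Group e l) 2 = zpowers (kerElt e l 0 3) := by
  rw [derivedSeries_succ, derivedSeries_one, ← ker_toAb]
  refine le_antisymm (commutator_le_of_comm'_mem fun g hg h hh => ?_) (zpowers_le.2 ?_)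
  · obtain ⟨z, c, hz, rfl⟩ := mem_ker_toAb.1 hg
    obtain ⟨w, d, hw, rfl⟩ := mem_ker_toAb.1 hh
    obtain ⟨k, hk⟩ := three_dvd_imForm hz hw
    rw [comm'_kerElt_kerElt hz hw, hk, ← mul_smul_comm]
    exact kerElt_three_mul_mem_zpowers _
  · have h₂ : kerElt e l ⟨57, 2⟩ 0 ∈ (toAb e l).ker :=
      mem_ker_toAb.2 ⟨_, _, by decide +kernel, rfl⟩
    have h₃ : kerElt e l ⟨78, 24⟩ 0 ∈ (toAb e l).ker :=
      mem_ker_toAb.2 ⟨_, _, by decide +kernel, rfl⟩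
    have hpow : comm' (kerElt e l ⟨57, 2⟩ 0) (kerElt e l ⟨78, 24⟩ 0) ^ 14 = kerElt e l 0 3 := by
      rw [comm'_kerElt_kerElt (by decide +kernel) (by decide +kernel), kerElt_pow (map_zero _)]
      exact congrArg₂ _ (smul_zero _) (by decide +kernel)
    have hmem := pow_mem (comm'_mem_commutator h₂ h₃) 14
    rwa [hpow] at hmem

lemma kerElt_zero_eq_one_iff {c : ZMod 27} : kerElt e l 0 c = 1 ↔ c = 0 := by
  rw [← kerElt_zero]
  exact ⟨fun h => embed_injective (congrArg TwistedForm.Ext.snd h), fun h => h ▸ rfl⟩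

lemma orderOf_kerElt_zero_three : orderOf (kerElt e l 0 3) = 9 := by
  have : Fact (Nat.Prime 3) := ⟨Nat.prime_three⟩
  refine orderOf_eq_prime_pow (p := 3) (n := 1) ?_ ?_ <;>
    rw [kerElt_pow (map_zero _), smul_zero, kerElt_zero_eq_one_iff] <;> decide

lemma natCard_derivedSeries_two : Nat.card (derivedSeries (D5Group e l) 2) = 9 := by
  rw [derivedSeries_two, Nat.card_zpowers, orderOf_kerElt_zero_three]

lemma derivedSeries_two_ne_bot : derivedSeries (D5Group e l) 2 ≠ ⊥ := by
  rw [Ne, ← card_eq_one, natCard_derivedSeries_two]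
  decide

lemma derivedSeries_three : derivedSeries (D5Group e l) 3 = ⊥ := by
  rw [derivedSeries_succ, derivedSeries_two]
  exact commutator_eq_bot_iff_le_centralizer.2 (le_centralizer _)

end D5Group

/-- The metabelian group of type D.5, the largest metabelian quotient of `D5Group e l`. -/
abbrev D5Metabelian (e : ℕ) [e.AtLeastTwo] (l : ℤˣ) : Type :=
  D5Group e l ⧸ derivedSeries (D5Group e l) 2

namespace D5Metabelian

variable {e : ℕ} [e.AtLeastTwo] {l : ℤˣ}

variable (e l) in
/-- The image of the generator `x`. -/
def x : D5Metabelian e l := (D5Group.x e l : D5Group e l)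

variable (e l) in
/-- The image of the generator `y`. -/
def y : D5Metabelian e l := (D5Group.y e l : D5Group e l)

open D5Group (kerElt kerElt_mul kerElt_pow kerElt_zero)

lemma sgen_eq_coe (j : ℕ) :
    sgen (x e l) (y e l) j = (sgen (D5Group.x e l) (D5Group.y e l) j : D5Group e l) :=
  (map_sgen (QuotientGroup.mk' _) _ _ j).symm

lemma tgenD_eq_coe (j : ℕ) :
    tgenD (x e l) (y e l) j = (tgenD (D5Group.x e l) (D5Group.y e l) j : D5Group e l) :=
  (map_tgenD (QuotientGroup.mk' _) _ _ j).symm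

lemma coe_kerElt_congr {z w : EisensteinQuot} {c d : ZMod 27} (hz : z = w)
    (hcd : ∃ k, c = 3 * k + d) :
    (kerElt e l z c : D5Metabelian e l) = kerElt e l w d := by
  obtain ⟨k, rfl⟩ := hcd
  have hmem : kerElt e l 0 (3 * k) ∈ derivedSeries (D5Group e l) 2 := by
    rw [D5Group.derivedSeries_two]
    exact D5Group.kerElt_three_mul_mem_zpowers k
  have hsplit : kerElt e l w (3 * k + d) = kerElt e l 0 (3 * k) * kerElt e l w d := by
    rw [kerElt_mul (map_zero _), zero_add, map_zero, AddMonoidHom.zero_apply, add_zero]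
  rw [hz, hsplit, QuotientGroup.mk_mul, (QuotientGroup.eq_one_iff _).2 hmem, one_mul]

lemma x_pow : x e l ^ 3 ^ e = (kerElt e l 0 l : D5Group e l) := by
  rw [x, ← QuotientGroup.mk_pow, D5Group.x_pow]

lemma x_pow_pow_three : (x e l ^ 3 ^ e) ^ 3 = 1 := by
  rw [x_pow, ← QuotientGroup.mk_pow, kerElt_pow (map_zero _), ← QuotientGroup.mk_one, ← kerElt_zero]
  exact coe_kerElt_congr (smul_zero _) ⟨l, by rw [add_zero, nsmul_eq_mul]; rfl⟩

lemma y_pow_three : y e l ^ 3 = sgen (x e l) (y e l) 7 ^ 2 := by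
  rw [sgen_eq_coe, y, ← QuotientGroup.mk_pow, ← QuotientGroup.mk_pow, D5Group.y_pow_three,
    D5Group.sgen_seven, kerElt_pow (by decide +kernel)]
  exact coe_kerElt_congr (by decide +kernel) (by decide +kernel)

lemma sgen_two_pow_three :
    sgen (x e l) (y e l) 2 ^ 3 = sgen (x e l) (y e l) 4 ^ 2 * sgen (x e l) (y e l) 5 := by
  simp only [sgen_eq_coe, ← QuotientGroup.mk_pow, ← QuotientGroup.mk_mul]
  rw [D5Group.sgen_two, D5Group.sgen_four, D5Group.sgen_five, kerElt_pow (by decide +kernel),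
    kerElt_pow (by decide +kernel), kerElt_mul (by decide +kernel)]
  exact coe_kerElt_congr (by decide +kernel) (by decide +kernel)

lemma sgen_three_pow_three :
    sgen (x e l) (y e l) 3 ^ 3 = sgen (x e l) (y e l) 5 ^ 2 * sgen (x e l) (y e l) 6 := by
  simp only [sgen_eq_coe, ← QuotientGroup.mk_pow, ← QuotientGroup.mk_mul]
  rw [D5Group.sgen_three, D5Group.sgen_five, D5Group.sgen_six, kerElt_pow (by decide +kernel),
    kerElt_pow (by decide +kernel), kerElt_mul (by decide +kernel)]
  exact coe_kerElt_congr (by decide +kernel) (by decide +kernel)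

lemma sgen_four_pow_three :
    sgen (x e l) (y e l) 4 ^ 3 = sgen (x e l) (y e l) 6 ^ 2 * sgen (x e l) (y e l) 7 := by
  simp only [sgen_eq_coe, ← QuotientGroup.mk_pow, ← QuotientGroup.mk_mul]
  rw [D5Group.sgen_four, D5Group.sgen_six, D5Group.sgen_seven, kerElt_pow (by decide +kernel),
    kerElt_pow (by decide +kernel), kerElt_mul (by decide +kernel)]
  exact coe_kerElt_congr (by decide +kernel) (by decide +kernel)

lemma sgen_five_pow_three : sgen (x e l) (y e l) 5 ^ 3 = sgen (x e l) (y e l) 7 ^ 2 := by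
  simp only [sgen_eq_coe, ← QuotientGroup.mk_pow]
  rw [D5Group.sgen_five, D5Group.sgen_seven, kerElt_pow (by decide +kernel),
    kerElt_pow (by decide +kernel)]
  exact coe_kerElt_congr (by decide +kernel) (by decide +kernel)

lemma tgenD_three {k : ℕ} (hk : ∃ d : ZMod 27, k • ((l : ℤ) : ZMod 27) = 3 * d + 4) :
    tgenD (x e l) (y e l) 3 =
      sgen (x e l) (y e l) 3 * sgen (x e l) (y e l) 7 * (x e l ^ 3 ^ e) ^ k := by
  have hw : (x e l ^ 3 ^ e) ^ k = (kerElt e l 0 4 : D5Group e l) := by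
    rw [x_pow, ← QuotientGroup.mk_pow, kerElt_pow (map_zero _)]
    exact coe_kerElt_congr (smul_zero k) hk
  rw [hw, tgenD_eq_coe, sgen_eq_coe, sgen_eq_coe, D5Group.tgenD_three_eq_mul,
    QuotientGroup.mk_mul, QuotientGroup.mk_mul]

lemma tgenD_four : tgenD (x e l) (y e l) 4 = sgen (x e l) (y e l) 4 := by
  rw [tgenD_eq_coe, sgen_eq_coe, D5Group.tgenD_four, D5Group.sgen_four]
  exact coe_kerElt_congr rfl (by decide +kernel)

lemma tgenD_five : tgenD (x e l) (y e l) 5 = sgen (x e l) (y e l) 5 := by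
  rw [tgenD_eq_coe, sgen_eq_coe, D5Group.tgenD_five, D5Group.sgen_five]
  exact coe_kerElt_congr rfl (by decide +kernel)

lemma tgenD_six : tgenD (x e l) (y e l) 6 = sgen (x e l) (y e l) 6 := by
  rw [tgenD_eq_coe, sgen_eq_coe, D5Group.tgenD_six, D5Group.sgen_six]

lemma tgenD_seven : tgenD (x e l) (y e l) 7 = sgen (x e l) (y e l) 7 := by
  rw [tgenD_eq_coe, sgen_eq_coe, D5Group.tgenD_seven, D5Group.sgen_seven]
  exact coe_kerElt_congr rfl (by decide +kernel)

lemma closure_x_y : closure {x e l, y e l} = ⊤ :=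
  closure_pair_map_eq_top (QuotientGroup.mk'_surjective _) D5Group.closure_x_y

lemma natCard_eq : Nat.card (D5Metabelian e l) = 3 ^ (8 + e) := by
  have h := card_eq_card_quotient_mul_card_subgroup (derivedSeries (D5Group e l) 2)
  rw [D5Group.natCard_eq, D5Group.natCard_derivedSeries_two,
    show 3 ^ (10 + e) = 3 ^ (8 + e) * 9 by ring] at h
  exact (Nat.eq_of_mul_eq_mul_right (by decide) h).symm

lemma isMetabelian : IsMetabelian (D5Metabelian e l) := derivedSeries_quotient_self 2

lemma isSigmaGroup : IsSigmaGroup (D5Metabelian e l) := D5Group.isSigmaGroup.quotient _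

lemma nonempty_abelianization :
    Nonempty (Abelianization (D5Metabelian e l) ≃* Multiplicative (ZMod (3 ^ e) × ZMod 3)) := by
  have hle : derivedSeries (D5Group e l) 2 ≤ commutator (D5Group e l) :=
    derivedSeries_antitone _ one_le_two
  exact D5Group.nonempty_abelianization.map (abelianizationQuotientEquiv _ hle).trans

end D5Metabelian

theorem stmt14_general (e i : ℕ) (he : 2 ≤ e) (hi : i = 2 ∨ i = 3) :
    ∃ (M : Type) (_ : Group M) (_ : Finite M) (x y : M),
      Subgroup.closure {x, y} = ⊤ ∧
      Nat.card M = 3 ^ (8 + e) ∧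
      IsMetabelian M ∧
      IsSigmaGroup M ∧
      (x ^ 3 ^ e) ^ 3 = 1 ∧
      y ^ 3 = sgen x y 7 ^ 2 ∧
      sgen x y 2 ^ 3 = sgen x y 4 ^ 2 * sgen x y 5 ∧
      sgen x y 3 ^ 3 = sgen x y 5 ^ 2 * sgen x y 6 ∧
      sgen x y 4 ^ 3 = sgen x y 6 ^ 2 * sgen x y 7 ∧
      sgen x y 5 ^ 3 = sgen x y 7 ^ 2 ∧
      tgenD x y 3 = sgen x y 3 * sgen x y 7 * (x ^ 3 ^ e) ^ (i - 1) ∧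
      tgenD x y 4 = sgen x y 4 ∧
      tgenD x y 5 = sgen x y 5 ∧
      tgenD x y 6 = sgen x y 6 ∧
      tgenD x y 7 = sgen x y 7 ∧
      Nonempty (Abelianization M ≃* Multiplicative (ZMod (3 ^ e) × ZMod 3)) ∧
      ∃ (G : Type) (_ : Group G) (_ : Finite G),
        Nat.card G = 3 ^ (10 + e) ∧
        Nonempty (Abelianization G ≃* Multiplicative (ZMod (3 ^ e) × ZMod 3)) ∧
        IsSigmaGroup G ∧
        derivedSeries G 2 ≠ ⊥ ∧
        derivedSeries G 3 = ⊥ ∧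
        ∃ φ : G →* M, Function.Surjective φ ∧ φ.ker = derivedSeries G 2 := by
  have : e.AtLeastTwo := ⟨he⟩
  obtain ⟨l, hl⟩ : ∃ l : ℤˣ, ∃ d : ZMod 27, (i - 1) • ((l : ℤ) : ZMod 27) = 3 * d + 4 := by
    rcases hi with rfl | rfl
    · exact ⟨1, -1, by decide⟩
    · exact ⟨-1, -2, by decide⟩
  open D5Metabelian in
  exact ⟨D5Metabelian e l, _, inferInstance, x e l, y e l, closure_x_y, natCard_eq, isMetabelian,
    isSigmaGroup, x_pow_pow_three, y_pow_three, sgen_two_pow_three, sgen_three_pow_three,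
    sgen_four_pow_three, sgen_five_pow_three, tgenD_three hl, tgenD_four, tgenD_five, tgenD_six,
    tgenD_seven, nonempty_abelianization, D5Group e l, _, inferInstance, D5Group.natCard_eq,
    D5Group.nonempty_abelianization, D5Group.isSigmaGroup, D5Group.derivedSeries_two_ne_bot,
    D5Group.derivedSeries_three, _, QuotientGroup.mk'_surjective _, QuotientGroup.ker_mk' _⟩

theorem stmt14 (e i : ℕ) (he : 7 ≤ e) (hi : i = 2 ∨ i = 3) :
    ∃ (M : Type) (_ : Group M) (_ : Finite M) (x y : M),
      Subgroup.closure {x, y} = ⊤ ∧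
      Nat.card M = 3 ^ (8 + e) ∧
      IsMetabelian M ∧
      IsSigmaGroup M ∧
      (x ^ 3 ^ e) ^ 3 = 1 ∧
      y ^ 3 = sgen x y 7 ^ 2 ∧
      sgen x y 2 ^ 3 = sgen x y 4 ^ 2 * sgen x y 5 ∧
      sgen x y 3 ^ 3 = sgen x y 5 ^ 2 * sgen x y 6 ∧
      sgen x y 4 ^ 3 = sgen x y 6 ^ 2 * sgen x y 7 ∧
      sgen x y 5 ^ 3 = sgen x y 7 ^ 2 ∧
      tgenD x y 3 = sgen x y 3 * sgen x y 7 * (x ^ 3 ^ e) ^ (i - 1) ∧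
      tgenD x y 4 = sgen x y 4 ∧
      tgenD x y 5 = sgen x y 5 ∧
      tgenD x y 6 = sgen x y 6 ∧
      tgenD x y 7 = sgen x y 7 ∧
      Nonempty (Abelianization M ≃* Multiplicative (ZMod (3 ^ e) × ZMod 3)) ∧
      ∃ (G : Type) (_ : Group G) (_ : Finite G),
        Nat.card G = 3 ^ (10 + e) ∧
        Nonempty (Abelianization G ≃* Multiplicative (ZMod (3 ^ e) × ZMod 3)) ∧
        IsSigmaGroup G ∧
        derivedSeries G 2 ≠ ⊥ ∧
        derivedSeries G 3 = ⊥ ∧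
        ∃ φ : G →* M, Function.Surjective φ ∧ φ.ker = derivedSeries G 2 :=
  stmt14_general e i (by lia) hi
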